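/- Let X₁, X₂, X₃ be independent uniformly distributed random points on [0,1] with the Euclidean distance |x−y|. Fix 0 < r₀ < 1/2. Then: (i) the probability that all three pairwise distances are less than r₀ equals 3r₀² − 2r₀³; (ii) the probability that |X₁−X₂| < r₀ and |X₁−X₃| < r₀ but |X₂−X₃| > r₀ equals r₀² − (4/3)r₀³; (iii) the probability that |X₁−X₂| < r₀ but |X₁−X₃| > r₀ and |X₂−X₃| > r₀ equals (14/3)r₀³ − 6r₀² + 2r₀; (iv) the probability that all three pairwise distances exceed r₀ equals (1−2r₀)³. -/

import Mathlib

open MeasureTheory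

/-- The unit cube `[0,1]³` as a subset of `ℝ × ℝ × ℝ`:
the law of three i.i.d. uniform points on `[0,1]` is Lebesgue measure on this cube. -/
def unitCube3 : Set (ℝ × ℝ × ℝ) :=
  Set.Icc (0:ℝ) 1 ×ˢ Set.Icc (0:ℝ) 1 ×ˢ Set.Icc (0:ℝ) 1

lemma aux_slice (F : Set (ℝ × ℝ × ℝ)) (hF : MeasurableSet F) (g : ℝ → ℝ) (hg : Continuous g)
    (hg0 : ∀ x ∈ Set.Icc (0:ℝ) 1, 0 ≤ g x)
    (h1 : ∀ x ∈ Set.Icc (0:ℝ) 1, volume (Prod.mk x ⁻¹' F) = ENNReal.ofReal (g x))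
    (h2 : ∀ x, x ∉ Set.Icc (0:ℝ) 1 → Prod.mk x ⁻¹' F = ∅) :
    volume.real F = ∫ x in (0:ℝ)..1, g x := by
  have e1 : volume F = ∫⁻ x in Set.Icc (0:ℝ) 1, ENNReal.ofReal (g x) := by
    rw [Measure.volume_eq_prod, Measure.prod_apply hF, ← lintegral_indicator measurableSet_Icc]
    congr 1
    ext x
    by_cases hx : x ∈ Set.Icc (0:ℝ) 1
    · rw [Set.indicator_of_mem hx, ← h1 x hx]
    · rw [Set.indicator_of_notMem hx, h2 x hx, measure_empty]
  have hn : 0 ≤ᵐ[volume.restrict (Set.Icc (0:ℝ) 1)] g :=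
    (ae_restrict_iff' measurableSet_Icc).2 (Filter.Eventually.of_forall hg0)
  rw [Measure.real, e1, ← integral_eq_lintegral_of_nonneg_ae hn hg.aestronglyMeasurable,
    intervalIntegral.integral_of_le zero_le_one, integral_Icc_eq_integral_Ioc]

lemma aux_null (c : ℝ) : volume {p : ℝ × ℝ × ℝ | |p.1 - p.2.1| = c} = 0 := by
  have hm : MeasurableSet {p : ℝ × ℝ × ℝ | |p.1 - p.2.1| = c} :=
    (isClosed_eq (by fun_prop) continuous_const).measurableSet
  rw [Measure.volume_eq_prod, Measure.measure_prod_null hm]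
  refine Filter.Eventually.of_forall fun x => ?_
  refine measure_mono_null (t := ({x - c, x + c} : Set ℝ) ×ˢ (Set.univ : Set ℝ)) ?_ ?_
  · rintro ⟨y, z⟩ h
    simp only [Set.mem_preimage, Set.mem_ofPred_eq] at h
    simp only [Set.mem_prod, Set.mem_insert_iff, Set.mem_singleton_iff, Set.mem_univ, and_true]
    rcases abs_choice (x - y) with h' | h' <;> rw [h'] at h
    · left; linarith
    · right; linarith
  · rw [Measure.volume_eq_prod, Measure.prod_prod, (Set.toFinite _).measure_zero, zero_mul]

/-- cyclic permutation of coordinates -/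
def cyc3 (p : ℝ × ℝ × ℝ) : ℝ × ℝ × ℝ := (p.2.1, p.2.2, p.1)

lemma cyc3_mp : MeasurePreserving cyc3 volume volume := by
  have h1 : MeasurePreserving (Prod.swap : ℝ × (ℝ × ℝ) → (ℝ × ℝ) × ℝ) volume volume :=
    Measure.measurePreserving_swap
  have h2 : MeasurePreserving (MeasurableEquiv.prodAssoc : (ℝ × ℝ) × ℝ ≃ᵐ ℝ × ℝ × ℝ)
    volume volume := volume_preserving_prodAssoc
  exact h2.comp h1

lemma cyc3_real (F : Set (ℝ × ℝ × ℝ)) (hF : MeasurableSet F) :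
    volume.real (cyc3 ⁻¹' F) = volume.real F := by
  rw [Measure.real, Measure.real, cyc3_mp.measure_preimage hF.nullMeasurableSet]

lemma int_cubic (a b c0 c1 c2 : ℝ) :
    ∫ x in a..b, (c0 + c1 * x + c2 * x ^ 2)
      = (c0 * b + c1 * b ^ 2 / 2 + c2 * b ^ 3 / 3) - (c0 * a + c1 * a ^ 2 / 2 + c2 * a ^ 3 / 3) := by
  have hd : ∀ x ∈ Set.uIcc a b, HasDerivAt
      (fun x : ℝ => c0 * x + c1 * x ^ 2 / 2 + c2 * x ^ 3 / 3) (c0 + c1 * x + c2 * x ^ 2) x := by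
    intro x _
    have := (((hasDerivAt_id x).const_mul c0).add
      (((hasDerivAt_pow 2 x).const_mul c1).div_const 2)).add
      (((hasDerivAt_pow 3 x).const_mul c2).div_const 3)
    refine HasDerivAt.congr_deriv this ?_
    push_cast; ring
  rw [intervalIntegral.integral_eq_sub_of_hasDerivAt hd
    (Continuous.intervalIntegrable (by fun_prop) _ _)]

lemma int_piece (g : ℝ → ℝ) (a b c0 c1 c2 : ℝ) (hab : a ≤ b)
    (h : ∀ x, a ≤ x → x ≤ b → g x = c0 + c1 * x + c2 * x ^ 2) :
    ∫ x in a..b, g x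
      = (c0 * b + c1 * b ^ 2 / 2 + c2 * b ^ 3 / 3) - (c0 * a + c1 * a ^ 2 / 2 + c2 * a ^ 3 / 3) := by
  rw [← int_cubic]
  apply intervalIntegral.integral_congr
  intro x hx
  rw [Set.uIcc_of_le hab] at hx
  exact h x hx.1 hx.2

/-- length of the neighbourhood -/
noncomputable def len3 (r x : ℝ) : ℝ := min 1 (x + r) - max 0 (x - r)

lemma len3_cont (r : ℝ) : Continuous (len3 r) := by unfold len3; fun_prop

lemma len3_nonneg (r x : ℝ) (h0 : 0 < r) (hx : x ∈ Set.Icc (0:ℝ) 1) : 0 ≤ len3 r x := by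
  obtain ⟨h1, h2⟩ := hx
  unfold len3
  rcases min_cases 1 (x + r) with h | h <;> rcases max_cases 0 (x - r) with h' | h' <;> linarith

lemma len3_a (r x : ℝ) (h12 : r < 1/2) (h2 : x ≤ r) : len3 r x = x + r := by
  unfold len3; rw [min_eq_right (by linarith), max_eq_left (by linarith)]; ring
lemma len3_b (r x : ℝ) (h1 : r ≤ x) (h2 : x ≤ 1 - r) : len3 r x = 2 * r := by
  unfold len3; rw [min_eq_right (by linarith), max_eq_right (by linarith)]; ring
lemma len3_c (r x : ℝ) (h12 : r < 1/2) (h2 : 1 - r ≤ x) : len3 r x = 1 - x + r := by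
  unfold len3; rw [min_eq_left (by linarith), max_eq_right (by linarith)]; ring

lemma int_split (g : ℝ → ℝ) (hg : Continuous g) (r : ℝ) :
    ∫ x in (0:ℝ)..1, g x = (∫ x in (0:ℝ)..r, g x) + (∫ x in r..(1-r), g x)
      + ∫ x in (1-r)..1, g x := by
  rw [intervalIntegral.integral_add_adjacent_intervals (hg.intervalIntegrable _ _)
    (hg.intervalIntegrable _ _), intervalIntegral.integral_add_adjacent_intervals
    (hg.intervalIntegrable _ _) (hg.intervalIntegrable _ _)]

lemma int_p (r : ℝ) (h0 : 0 < r) (h12 : r < 1/2) :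
    ∫ x in (0:ℝ)..1, len3 r x = 2 * r - r ^ 2 := by
  rw [int_split _ (len3_cont r) r,
    int_piece _ 0 r r 1 0 h0.le (fun x _ h => by rw [len3_a r x h12 h]; ring),
    int_piece _ r (1-r) (2*r) 0 0 (by linarith) (fun x h h' => by rw [len3_b r x h h']; ring),
    int_piece _ (1-r) 1 (1+r) (-1) 0 (by linarith)
      (fun x h _ => by rw [len3_c r x h12 h]; ring)]
  ring

lemma int_q (r : ℝ) (h0 : 0 < r) (h12 : r < 1/2) :
    ∫ x in (0:ℝ)..1, len3 r x * len3 r x = 4 * r ^ 2 - 10 / 3 * r ^ 3 := by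
  rw [int_split (fun x => len3 r x * len3 r x) ((len3_cont r).mul (len3_cont r)) r,
    int_piece _ 0 r (r^2) (2*r) 1 h0.le (fun x _ h => by rw [len3_a r x h12 h]; ring),
    int_piece _ r (1-r) (4*r^2) 0 0 (by linarith) (fun x h h' => by rw [len3_b r x h h']; ring),
    int_piece _ (1-r) 1 ((1+r)^2) (-2*(1+r)) 1 (by linarith)
      (fun x h _ => by rw [len3_c r x h12 h]; ring)]
  ring

lemma int_t (r : ℝ) (h0 : 0 < r) (h12 : r < 1/2) :
    ∫ x in (0:ℝ)..1, min r (1-x) * min r (1-x) = r ^ 2 - 2 / 3 * r ^ 3 := by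
  rw [int_split _ (by fun_prop) r,
    int_piece _ 0 r (r^2) 0 0 h0.le (fun x _ h => by rw [min_eq_left (by linarith)]; ring),
    int_piece _ r (1-r) (r^2) 0 0 (by linarith)
      (fun x h h' => by rw [min_eq_left (by linarith)]; ring),
    int_piece _ (1-r) 1 1 (-2) 1 (by linarith)
      (fun x h _ => by rw [min_eq_right (by linarith)]; ring)]
  ring

lemma vol_len (r x : ℝ) (h0 : 0 < r) (hx : x ∈ Set.Icc (0:ℝ) 1) :
    volume {y : ℝ | (0 ≤ y ∧ y ≤ 1) ∧ |x - y| < r} = ENNReal.ofReal (len3 r x) := by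
  apply le_antisymm
  · unfold len3
    rw [← Real.volume_Icc]
    apply measure_mono
    rintro y ⟨⟨h1, h2⟩, h3⟩
    rw [abs_lt] at h3
    exact ⟨max_le h1 (by linarith), le_min h2 (by linarith)⟩
  · unfold len3
    rw [← Real.volume_Ioo]
    apply measure_mono
    rintro y ⟨h1, h2⟩
    rw [max_lt_iff] at h1
    rw [lt_min_iff] at h2
    exact ⟨⟨h1.1.le, h2.1.le⟩, abs_lt.2 ⟨by linarith, by linarith⟩⟩

lemma vol_T (r x : ℝ) (S : Set ℝ) (h0 : 0 < r) (h1 : Set.Ioo x (min 1 (x + r)) ⊆ S)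
    (h2 : S ⊆ Set.Icc x (min 1 (x + r))) :
    volume S = ENNReal.ofReal (min r (1 - x)) := by
  have e : min r (1 - x) = min 1 (x + r) - x := by
    rcases min_cases 1 (x + r) with h | h <;> rcases min_cases r (1 - x) with h' | h' <;> linarith
  rw [e]
  apply le_antisymm
  · rw [← Real.volume_Icc]; exact measure_mono h2
  · rw [← Real.volume_Ioo]; exact measure_mono h1

def E12 (r : ℝ) : Set (ℝ × ℝ × ℝ) := {p | |p.1 - p.2.1| < r}
def E13 (r : ℝ) : Set (ℝ × ℝ × ℝ) := {p | |p.1 - p.2.2| < r}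
def E23 (r : ℝ) : Set (ℝ × ℝ × ℝ) := {p | |p.2.1 - p.2.2| < r}
lemma mE12 (r : ℝ) : MeasurableSet (E12 r) :=
  (isOpen_lt (by fun_prop) continuous_const).measurableSet
lemma mE13 (r : ℝ) : MeasurableSet (E13 r) :=
  (isOpen_lt (by fun_prop) continuous_const).measurableSet
lemma mE23 (r : ℝ) : MeasurableSet (E23 r) :=
  (isOpen_lt (by fun_prop) continuous_const).measurableSet
lemma mQ : MeasurableSet unitCube3 :=
  measurableSet_Icc.prod (measurableSet_Icc.prod measurableSet_Icc)
lemma cQ : cyc3 ⁻¹' unitCube3 = unitCube3 := by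
  ext ⟨x, y, z⟩; simp only [cyc3, unitCube3, Set.mem_preimage, Set.mem_prod]; tauto
lemma c12 (r : ℝ) : cyc3 ⁻¹' (E12 r) = E23 r := by
  ext ⟨x, y, z⟩; simp [cyc3, E12, E23]
lemma c23 (r : ℝ) : cyc3 ⁻¹' (E23 r) = E13 r := by
  ext ⟨x, y, z⟩; simp [cyc3, E13, E23, abs_sub_comm]
lemma c13 (r : ℝ) : cyc3 ⁻¹' (E13 r) = E12 r := by
  ext ⟨x, y, z⟩; simp [cyc3, E13, E12, abs_sub_comm]

lemma val_1 : volume.real unitCube3 = 1 := by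
  rw [unitCube3, Measure.real, Measure.volume_eq_prod, Measure.prod_prod, Measure.volume_eq_prod,
    Measure.prod_prod]
  simp

lemma val_p (r : ℝ) (h0 : 0 < r) (h12 : r < 1/2) :
    volume.real (unitCube3 ∩ E12 r) = 2 * r - r ^ 2 := by
  rw [← int_p r h0 h12]
  refine aux_slice _ (mQ.inter (mE12 r)) _ (len3_cont r) (fun x hx => len3_nonneg r x h0 hx) ?_ ?_
  · intro x hx
    have : Prod.mk x ⁻¹' (unitCube3 ∩ E12 r)
        = {y : ℝ | (0 ≤ y ∧ y ≤ 1) ∧ |x - y| < r} ×ˢ Set.Icc (0:ℝ) 1 := by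
      ext ⟨y, z⟩
      simp only [unitCube3, E12, Set.mem_preimage, Set.mem_inter_iff, Set.mem_prod, Set.mem_Icc,
        Set.mem_ofPred_eq] at hx ⊢
      tauto
    rw [this, Measure.volume_eq_prod, Measure.prod_prod, vol_len r x h0 hx]
    simp
  · intro x hx
    ext ⟨y, z⟩
    simp only [unitCube3, Set.mem_preimage, Set.mem_inter_iff, Set.mem_prod,
      Set.mem_empty_iff_false]
    tauto

lemma val_q (r : ℝ) (h0 : 0 < r) (h12 : r < 1/2) :
    volume.real (unitCube3 ∩ (E12 r ∩ E13 r)) = 4 * r ^ 2 - 10 / 3 * r ^ 3 := by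
  rw [← int_q r h0 h12]
  refine aux_slice _ (mQ.inter ((mE12 r).inter (mE13 r))) _ ((len3_cont r).mul (len3_cont r))
    (fun x hx => mul_nonneg (len3_nonneg r x h0 hx) (len3_nonneg r x h0 hx)) ?_ ?_
  · intro x hx
    have : Prod.mk x ⁻¹' (unitCube3 ∩ (E12 r ∩ E13 r))
        = {y : ℝ | (0 ≤ y ∧ y ≤ 1) ∧ |x - y| < r} ×ˢ {y : ℝ | (0 ≤ y ∧ y ≤ 1) ∧ |x - y| < r} := by
      ext ⟨y, z⟩
      simp only [unitCube3, E12, E13, Set.mem_preimage, Set.mem_inter_iff, Set.mem_prod,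
        Set.mem_Icc, Set.mem_ofPred_eq] at hx ⊢
      tauto
    rw [this, Measure.volume_eq_prod, Measure.prod_prod, vol_len r x h0 hx,
      ENNReal.ofReal_mul (len3_nonneg r x h0 hx)]
  · intro x hx
    ext ⟨y, z⟩
    simp only [unitCube3, Set.mem_preimage, Set.mem_inter_iff, Set.mem_prod,
      Set.mem_empty_iff_false]
    tauto

def M1 : Set (ℝ × ℝ × ℝ) := {p | p.1 ≤ p.2.1 ∧ p.1 < p.2.2}
lemma mM1 : MeasurableSet M1 := by
  have h1 : MeasurableSet {p : ℝ × ℝ × ℝ | p.1 ≤ p.2.1} :=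
    (isClosed_le (by fun_prop) (by fun_prop)).measurableSet
  have h2 : MeasurableSet {p : ℝ × ℝ × ℝ | p.1 < p.2.2} :=
    (isOpen_lt (by fun_prop) (by fun_prop)).measurableSet
  exact h1.inter h2

def TT (r : ℝ) : Set (ℝ × ℝ × ℝ) := unitCube3 ∩ (E12 r ∩ E13 r ∩ E23 r)
lemma mTT (r : ℝ) : MeasurableSet (TT r) :=
  mQ.inter (((mE12 r).inter (mE13 r)).inter (mE23 r))
lemma cTT (r : ℝ) : cyc3 ⁻¹' (TT r) = TT r := by
  simp only [TT, Set.preimage_inter, cQ, c12, c13, c23]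
  congr 1; ext p; simp only [Set.mem_inter_iff]; tauto

lemma val_t1 (r : ℝ) (h0 : 0 < r) (h12 : r < 1/2) :
    volume.real (TT r ∩ M1) = r ^ 2 - 2 / 3 * r ^ 3 := by
  rw [← int_t r h0 h12]
  have hn : ∀ x ∈ Set.Icc (0:ℝ) 1, 0 ≤ min r (1 - x) :=
    fun x hx => le_min h0.le (by linarith [hx.2])
  refine aux_slice _ ((mTT r).inter mM1) _ (by fun_prop)
    (fun x hx => mul_nonneg (hn x hx) (hn x hx)) ?_ ?_
  · intro x hx
    have : Prod.mk x ⁻¹' (TT r ∩ M1)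
        = {y : ℝ | x ≤ y ∧ y ≤ 1 ∧ y < x + r} ×ˢ {y : ℝ | x < y ∧ y ≤ 1 ∧ y < x + r} := by
      ext ⟨y, z⟩
      simp only [TT, M1, unitCube3, E12, E13, E23, Set.mem_preimage, Set.mem_inter_iff,
        Set.mem_prod, Set.mem_Icc, Set.mem_ofPred_eq, abs_lt] at hx ⊢
      constructor
      · rintro ⟨⟨⟨a, ⟨b1, b2⟩, c1, c2⟩, ⟨⟨d1, d2⟩, e1, e2⟩, f1, f2⟩, g1, g2⟩
        refine ⟨⟨?_, ?_, ?_⟩, ?_, ?_, ?_⟩ <;> linarith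
      · rintro ⟨⟨a1, a2, a3⟩, b1, b2, b3⟩
        refine ⟨⟨⟨hx, ⟨?_, ?_⟩, ?_, ?_⟩, ⟨⟨?_, ?_⟩, ?_, ?_⟩, ?_, ?_⟩, ?_, ?_⟩ <;> linarith
    rw [this, Measure.volume_eq_prod, Measure.prod_prod, ENNReal.ofReal_mul (hn x hx),
      vol_T r x _ h0, vol_T r x _ h0]
    · rintro y ⟨h1, h2⟩
      rw [lt_min_iff] at h2
      exact ⟨h1, h2.1.le, h2.2⟩
    · rintro y ⟨h1, h2, h3⟩
      exact ⟨h1.le, le_min h2 h3.le⟩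
    · rintro y ⟨h1, h2⟩
      rw [lt_min_iff] at h2
      exact ⟨h1.le, h2.1.le, h2.2⟩
    · rintro y ⟨h1, h2, h3⟩
      exact ⟨h1, le_min h2 h3.le⟩
  · intro x hx
    ext ⟨y, z⟩
    simp only [TT, unitCube3, Set.mem_preimage, Set.mem_inter_iff, Set.mem_prod,
      Set.mem_empty_iff_false]
    tauto

lemma finQ : volume unitCube3 ≠ ⊤ := by
  rw [unitCube3, Measure.volume_eq_prod, Measure.prod_prod, Measure.volume_eq_prod,
    Measure.prod_prod]
  simp

lemma finS {F : Set (ℝ × ℝ × ℝ)} (h : F ⊆ unitCube3) : volume F ≠ ⊤ :=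
  measure_ne_top_of_subset h finQ

lemma val_t (r : ℝ) (h0 : 0 < r) (h12 : r < 1/2) :
    volume.real (TT r) = 3 * r ^ 2 - 2 * r ^ 3 := by
  have m1 := (mTT r).inter mM1
  have m2 := cyc3_mp.measurable m1
  have m3 := cyc3_mp.measurable m2
  have v1 := val_t1 r h0 h12
  have v2 := cyc3_real _ m1
  have v3 := cyc3_real _ m2
  rw [Set.preimage_inter, cTT] at v2 v3 m2 m3
  rw [Set.preimage_inter, cTT] at v3 m3
  set N1 := TT r ∩ M1
  set N2 := TT r ∩ cyc3 ⁻¹' M1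
  set N3 := TT r ∩ cyc3 ⁻¹' (cyc3 ⁻¹' M1)
  have s : TT r ⊆ unitCube3 := Set.inter_subset_left
  have f1 : volume N1 ≠ ⊤ := finS (Set.inter_subset_left.trans s)
  have f2 : volume N2 ≠ ⊤ := finS (Set.inter_subset_left.trans s)
  have f3 : volume N3 ≠ ⊤ := finS (Set.inter_subset_left.trans s)
  have d1 : Disjoint N1 N2 := by
    rw [Set.disjoint_left]
    rintro ⟨x, y, z⟩ ⟨_, h⟩ ⟨_, h'⟩
    simp only [M1, cyc3, Set.mem_preimage, Set.mem_ofPred_eq] at h h'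
    linarith
  have d2 : Disjoint (N1 ∪ N2) N3 := by
    rw [Set.disjoint_left]
    rintro ⟨x, y, z⟩ h ⟨_, h'⟩
    simp only [N1, N2, M1, cyc3, Set.mem_preimage, Set.mem_ofPred_eq, Set.mem_union,
      Set.mem_inter_iff] at h h'
    rcases h with h | h <;> linarith [h.2.1, h.2.2]
  have hae : (TT r : Set (ℝ × ℝ × ℝ)) =ᵐ[volume] (N1 ∪ N2 ∪ N3 : Set _) := by
    have hz : ∀ᵐ p : ℝ × ℝ × ℝ, ¬ |p.1 - p.2.1| = 0 := by
      rw [ae_iff]; simpa using aux_null 0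
    rw [Filter.eventuallyEq_set]
    filter_upwards [hz] with p hp
    obtain ⟨x, y, z⟩ := p
    have hp : x ≠ y := fun h => hp (by simp [h])
    simp only [N1, N2, N3, M1, cyc3, Set.mem_preimage, Set.mem_ofPred_eq, Set.mem_union,
      Set.mem_inter_iff]
    constructor
    · intro h
      simp only [h, true_and]
      grind
    · tauto
  rw [measureReal_congr hae, measureReal_union d2 m3 (by finiteness), measureReal_union d1 m2]
  linarith

theorem stmt_2 (r₀ : ℝ) (h0 : 0 < r₀) (h12 : r₀ < 1/2) :
    (volume {p : ℝ × ℝ × ℝ | p ∈ unitCube3 ∧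
        |p.1 - p.2.1| < r₀ ∧ |p.1 - p.2.2| < r₀ ∧ |p.2.1 - p.2.2| < r₀}
      = ENNReal.ofReal (3 * r₀ ^ 2 - 2 * r₀ ^ 3)) ∧
    (volume {p : ℝ × ℝ × ℝ | p ∈ unitCube3 ∧
        |p.1 - p.2.1| < r₀ ∧ |p.1 - p.2.2| < r₀ ∧ |p.2.1 - p.2.2| > r₀}
      = ENNReal.ofReal (r₀ ^ 2 - (4/3) * r₀ ^ 3)) ∧
    (volume {p : ℝ × ℝ × ℝ | p ∈ unitCube3 ∧
        |p.1 - p.2.1| < r₀ ∧ |p.1 - p.2.2| > r₀ ∧ |p.2.1 - p.2.2| > r₀}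
      = ENNReal.ofReal ((14/3) * r₀ ^ 3 - 6 * r₀ ^ 2 + 2 * r₀)) ∧
    (volume {p : ℝ × ℝ × ℝ | p ∈ unitCube3 ∧
        |p.1 - p.2.1| > r₀ ∧ |p.1 - p.2.2| > r₀ ∧ |p.2.1 - p.2.2| > r₀}
      = ENNReal.ofReal ((1 - 2 * r₀) ^ 3)) := by
  have mA := mE12 r₀
  have mB := mE13 r₀
  have mC := mE23 r₀
  have vA := val_p r₀ h0 h12
  have vC := cyc3_real _ (mQ.inter mA)
  have vB := cyc3_real _ (mQ.inter mC)
  have vAB := val_q r₀ h0 h12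
  have vAC := cyc3_real _ (mQ.inter (mA.inter mB))
  have vBC := cyc3_real _ (mQ.inter (mC.inter mA))
  have vT := val_t r₀ h0 h12
  simp only [Set.preimage_inter, cQ, c12, c13, c23] at vC vB vAC vBC
  have n12 : ∀ᵐ p : ℝ × ℝ × ℝ, ¬ |p.1 - p.2.1| = r₀ := by
    rw [ae_iff]; simpa using aux_null r₀
  have n23 : ∀ᵐ p : ℝ × ℝ × ℝ, ¬ |p.2.1 - p.2.2| = r₀ :=
    cyc3_mp.quasiMeasurePreserving.ae n12
  have n13 : ∀ᵐ p : ℝ × ℝ × ℝ, ¬ |p.1 - p.2.2| = r₀ := by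
    filter_upwards [cyc3_mp.quasiMeasurePreserving.ae n23] with p hp
    rw [abs_sub_comm]; exact hp
  have key : ∀ (F G : Set (ℝ × ℝ × ℝ)) (v : ℝ), F ⊆ unitCube3 →
      (∀ p : ℝ × ℝ × ℝ, ¬ |p.1 - p.2.1| = r₀ → ¬ |p.2.1 - p.2.2| = r₀ → ¬ |p.1 - p.2.2| = r₀ →
        (p ∈ F ↔ p ∈ G)) → volume.real G = v → volume F = ENNReal.ofReal v := by
    intro F G v hF h hv
    have : F =ᵐ[volume] G := by
      rw [Filter.eventuallyEq_set]
      filter_upwards [n12, n23, n13] with p a b c using h p a b c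
    rw [← hv, ← measureReal_congr this, Measure.real, ENNReal.ofReal_toReal (finS hF)]
  have split : ∀ (F G : Set (ℝ × ℝ × ℝ)), MeasurableSet G → 
      volume.real (unitCube3 ∩ F ∩ G) + volume.real ((unitCube3 ∩ F) \ G)
        = volume.real (unitCube3 ∩ F) := fun F G hG =>
    measureReal_inter_add_diff hG (finS Set.inter_subset_left)
  have mem12 : ∀ p, p ∈ E12 r₀ ↔ |p.1 - p.2.1| < r₀ := fun p => Iff.rfl
  have mem13 : ∀ p, p ∈ E13 r₀ ↔ |p.1 - p.2.2| < r₀ := fun p => Iff.rfl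
  have mem23 : ∀ p, p ∈ E23 r₀ ↔ |p.2.1 - p.2.2| < r₀ := fun p => Iff.rfl
  have v1 := val_1
  unfold TT at vT
  generalize unitCube3 = Q at *
  generalize E12 r₀ = A at *
  generalize E13 r₀ = B at *
  generalize E23 r₀ = C at *
  -- AB \ C
  have s1 := split (A ∩ B) C mC
  have s2 := split (A ∩ C) B mB
  have s3 := split (C ∩ B) A mA
  have s4 := split A B mB
  have s5 := split (A \ B) C mC
  have s6 := split Set.univ A mA
  have s7 := split Aᶜ B mB
  have s8 := split (Aᶜ \ B) C mC
  have s9 := split B A mA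
  have s10 := split (C \ A) B mB
  have s11 := split C A mA
  have e (F G : Set (ℝ × ℝ × ℝ)) (h : ∀ p, p ∈ F ↔ p ∈ G) : volume.real F = volume.real G := by
    rw [Set.ext h]
  have t1 : volume.real (Q ∩ (A ∩ B) ∩ C) = volume.real (Q ∩ (A ∩ B ∩ C)) :=
    e _ _ (by intro p; simp; tauto)
  have t2 : volume.real (Q ∩ (A ∩ C) ∩ B) = volume.real (Q ∩ (A ∩ B ∩ C)) :=
    e _ _ (by intro p; simp; tauto)
  have t3 : volume.real (Q ∩ (C ∩ B) ∩ A) = volume.real (Q ∩ (A ∩ B ∩ C)) :=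
    e _ _ (by intro p; simp; tauto)
  have t4 : volume.real (Q ∩ A ∩ B) = volume.real (Q ∩ (A ∩ B)) :=
    e _ _ (by intro p; simp; tauto)
  have t5 : volume.real ((Q ∩ A) \ B) = volume.real (Q ∩ (A \ B)) :=
    e _ _ (by intro p; simp; tauto)
  have t6 : volume.real (Q ∩ (A \ B) ∩ C) = volume.real ((Q ∩ (A ∩ C)) \ B) :=
    e _ _ (by intro p; simp; tauto)
  have t7 : volume.real (Q ∩ Set.univ) = volume.real Q := by simp
  have t8 : volume.real (Q ∩ Set.univ ∩ A) = volume.real (Q ∩ A) := by simp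
  have t9 : volume.real ((Q ∩ Set.univ) \ A) = volume.real (Q ∩ Aᶜ) :=
    e _ _ (by intro p; simp)
  have t10 : volume.real ((Q ∩ Aᶜ) \ B) = volume.real (Q ∩ (Aᶜ \ B)) :=
    e _ _ (by intro p; simp; tauto)
  have t11 : volume.real (Q ∩ Aᶜ ∩ B) = volume.real ((Q ∩ B) \ A) :=
    e _ _ (by intro p; simp; tauto)
  have t12 : volume.real (Q ∩ B ∩ A) = volume.real (Q ∩ (A ∩ B)) :=
    e _ _ (by intro p; simp; tauto)
  have t13 : volume.real (Q ∩ (Aᶜ \ B) ∩ C) = volume.real ((Q ∩ (C \ A)) \ B) :=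
    e _ _ (by intro p; simp; tauto)
  have t14 : volume.real (Q ∩ (C \ A) ∩ B) = volume.real ((Q ∩ (C ∩ B)) \ A) :=
    e _ _ (by intro p; simp; tauto)
  have t15 : volume.real ((Q ∩ C) \ A) = volume.real (Q ∩ (C \ A)) :=
    e _ _ (by intro p; simp; tauto)
  have t16 : volume.real (Q ∩ C ∩ A) = volume.real (Q ∩ (C ∩ A)) :=
    e _ _ (by intro p; simp; tauto)
  have t17 : volume.real (Q ∩ (A ∩ C)) = volume.real (Q ∩ (C ∩ A)) := by rw [Set.inter_comm A C]
  have t18 : volume.real (Q ∩ (B ∩ C)) = volume.real (Q ∩ (C ∩ B)) := by rw [Set.inter_comm B C]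
  have gt_iff : ∀ a : ℝ, ¬ a = r₀ → (a > r₀ ↔ ¬ a < r₀) := fun a h =>
    ⟨fun h' => not_lt.2 h'.le, fun h' => lt_of_le_of_ne (not_lt.1 h') (Ne.symm h)⟩
  refine ⟨key _ (Q ∩ (A ∩ B ∩ C)) _ (fun p h => h.1) ?_ vT,
    key _ ((Q ∩ (A ∩ B)) \ C) _ (fun p h => h.1) ?_ (by linarith),
    key _ ((Q ∩ (A \ B)) \ C) _ (fun p h => h.1) ?_ (by linarith),
    key _ ((Q ∩ (Aᶜ \ B)) \ C) _ (fun p h => h.1) ?_ (by linarith)⟩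
  all_goals
    intro p a b c
    simp only [Set.mem_ofPred_eq, Set.mem_inter_iff, Set.mem_diff, Set.mem_compl_iff, mem12, mem13,
      mem23, gt_iff _ a, gt_iff _ b, gt_iff _ c]
    tauto
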